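/- Let N be a nonempty finite set and let p_data, p_G : N → ℝ be probability distributions on N with p_data(x) > 0 and p_G(x) > 0 for all x. Then Σ_{x∈N} p_data(x)·log( p_data(x)/(p_data(x)+p_G(x)) ) + Σ_{x∈N} p_G(x)·log( p_G(x)/(p_data(x)+p_G(x)) ) = −log 4 + 2·JSD(p_data‖p_G), where JSD(p‖q) = (1/2)·Σ_{x∈N} p(x)·log( 2p(x)/(p(x)+q(x)) ) + (1/2)·Σ_{x∈N} q(x)·log( 2q(x)/(p(x)+q(x)) ). Consequently, the value of the vanilla GAN utility at the best-response discriminator D*_G(x) = p_data(x)/(p_data(x)+p_G(x)) equals −log 4 + 2·JSD(p_data‖p_G). -/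

import Mathlib

open Finset

/-- The Jensen–Shannon divergence between two distributions on a finite set. -/
noncomputable def JSD {N : Type*} [Fintype N] (p q : N → ℝ) : ℝ :=
  1 / 2 * ∑ x, p x * Real.log (2 * p x / (p x + q x)) +
    1 / 2 * ∑ x, q x * Real.log (2 * q x / (p x + q x))

/-! Pulling the factor `2` out of each logarithm in `2 * JSD p q` costs `log 2` per unit of mass,
that is `2 * log 2 = log 4` for two probability distributions. What remains is the utility at the
best response `D = p / (p + q)`, because `1 - D = q / (p + q)`. At a point where `p` or `q`
vanishes the logarithm may be a junk value, but it is multiplied by zero. -/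

/-- The vanilla GAN utility `V(G, D)` of a discriminator `D`, with data weights `p` and generator
weights `q` on a finite set. The generator `G` is encoded by its weights `q`, and the weights need
not be normalised. -/
noncomputable def ganUtility {N : Type*} [Fintype N] (p q D : N → ℝ) : ℝ :=
  ∑ x, p x * Real.log (D x) + ∑ x, q x * Real.log (1 - D x)

/-- The best-response discriminator `D*_G` against data weights `p` and generator weights `q`.
Where both weights vanish any value is a best response; division by zero selects `0`. -/
noncomputable def bestResponse {N : Type*} (p q : N → ℝ) (x : N) : ℝ :=
  p x / (p x + q x)

theorem one_sub_bestResponse {N : Type*} {p q : N → ℝ} {x : N} (h : p x + q x ≠ 0) :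
    1 - bestResponse p q x = q x / (p x + q x) := by
  rw [bestResponse, one_sub_div h, add_sub_cancel_left]

theorem mul_log_const_mul_div {c a m : ℝ} (hc : c ≠ 0) (h : m = 0 → a = 0) :
    a * Real.log (c * a / m) = a * Real.log c + a * Real.log (a / m) := by
  rcases eq_or_ne a 0 with rfl | ha
  · simp
  · have hm : m ≠ 0 := mt h ha
    rw [mul_div_assoc, Real.log_mul hc (div_ne_zero ha hm), mul_add]

theorem sum_mul_log_const_mul_div {ι : Type*} (s : Finset ι) {a m : ι → ℝ} {c : ℝ} (hc : c ≠ 0)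
    (h : ∀ i ∈ s, m i = 0 → a i = 0) :
    ∑ i ∈ s, a i * Real.log (c * a i / m i) =
      (∑ i ∈ s, a i) * Real.log c + ∑ i ∈ s, a i * Real.log (a i / m i) := by
  rw [sum_congr rfl fun i hi => mul_log_const_mul_div hc (h i hi), sum_add_distrib, sum_mul]

section NonnegativeWeights

variable {N : Type*} [Fintype N] {p q : N → ℝ}

theorem two_mul_JSD (hp : ∀ x, 0 ≤ p x) (hq : ∀ x, 0 ≤ q x) :
    2 * JSD p q = (∑ x, p x + ∑ x, q x) * Real.log 2 +
      (∑ x, p x * Real.log (p x / (p x + q x)) + ∑ x, q x * Real.log (q x / (p x + q x))) := by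
  have hzero (x : N) : p x + q x = 0 → p x = 0 ∧ q x = 0 :=
    (add_eq_zero_iff_of_nonneg (hp x) (hq x)).1
  rw [JSD, sum_mul_log_const_mul_div univ two_ne_zero fun x _ h => (hzero x h).1,
    sum_mul_log_const_mul_div univ two_ne_zero fun x _ h => (hzero x h).2]
  ring

theorem ganUtility_bestResponse (hp : ∀ x, 0 ≤ p x) (hq : ∀ x, 0 ≤ q x) :
    ganUtility p q (bestResponse p q) =
      ∑ x, p x * Real.log (p x / (p x + q x)) + ∑ x, q x * Real.log (q x / (p x + q x)) := by
  refine congrArg₂ (· + ·) rfl (sum_congr rfl fun x _ => ?_)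
  rcases eq_or_ne (p x + q x) 0 with hzero | hne
  · rw [((add_eq_zero_iff_of_nonneg (hp x) (hq x)).1 hzero).2, zero_mul, zero_mul]
  · rw [one_sub_bestResponse hne]

theorem vanilla_gan_value_eq_jsd_general (hp : ∀ x, 0 ≤ p x) (hq : ∀ x, 0 ≤ q x) :
    (∑ x, p x * Real.log (p x / (p x + q x)) + ∑ x, q x * Real.log (q x / (p x + q x)) =
      -((∑ x, p x + ∑ x, q x) / 2 * Real.log 4) + 2 * JSD p q) ∧
    ganUtility p q (bestResponse p q) =
      -((∑ x, p x + ∑ x, q x) / 2 * Real.log 4) + 2 * JSD p q := by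
  rw [ganUtility_bestResponse hp hq, and_self, two_mul_JSD hp hq, Real.log_four_eq]
  ring

end NonnegativeWeights

/-- **The vanilla GAN utility at the best-response discriminator equals
`−log 4 + 2·JSD(p_data‖p_G)`.** -/
theorem vanilla_gan_value_eq_jsd
    {N : Type*} [Fintype N] [Nonempty N]
    (pdata pG : N → ℝ) (hpdata : ∀ x, 0 < pdata x) (hpG : ∀ x, 0 < pG x)
    (hsum1 : ∑ x, pdata x = 1) (hsum2 : ∑ x, pG x = 1) :
    (∑ x, pdata x * Real.log (pdata x / (pdata x + pG x)) +
        ∑ x, pG x * Real.log (pG x / (pdata x + pG x)) =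
      -Real.log 4 + 2 * JSD pdata pG) ∧
    (∑ x, pdata x * Real.log (pdata x / (pdata x + pG x)) +
        ∑ x, pG x * Real.log (1 - pdata x / (pdata x + pG x)) =
      -Real.log 4 + 2 * JSD pdata pG) := by
  simpa [hsum1, hsum2, ganUtility, bestResponse] using
    vanilla_gan_value_eq_jsd_general (fun x => (hpdata x).le) (fun x => (hpG x).le)
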